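/- Let H = F(a,b) be the free group on two generators a, b, and let T = {b} ∪ {aᵏ : k ∈ ℤ, k ≠ 0} be the (infinite) generating set of H consisting of b together with all nontrivial powers of a. Then for every integer n ≥ 1, the word length of bⁿ with respect to T equals n; that is, dist_{(H,T)}(e, bⁿ) = n. -/

import Mathlib

open Pointwise

/-- The word metric on a group `G` with respect to a (possibly infinite) generating set
`S`: `wordDist S g h` is the least `m` such that `g⁻¹ * h` is a product of `m` elements
of `S ∪ S⁻¹`. -/
noncomputable def wordDist {G : Type*} [Group G] (S : Set G) (g h : G) : ℝ :=
  (sInf {n : ℕ | g⁻¹ * h ∈ (S ∪ S⁻¹) ^ n} : ℕ)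

/-- The generators `a`, `b` of the free group `F(a,b)`. -/
inductive Gen : Type
  | a : Gen
  | b : Gen

/-- The infinite generating set `T = {b} ∪ {aᵏ : k ∈ ℤ, k ≠ 0}` of the free group
`F(a,b)`. -/
def Tset : Set (FreeGroup Gen) :=
  {FreeGroup.of Gen.b} ∪ {x | ∃ k : ℤ, k ≠ 0 ∧ x = FreeGroup.of Gen.a ^ k}

/-!
The exponent sum of `b` is a homomorphism from `F(a,b)` to `ℤ` that takes values in `{0, 1}` on `T`.
A product of `m` elements of `T ∪ T⁻¹` therefore has exponent sum at most `m` in absolute value,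
while `bⁿ` has exponent sum `n`.
-/

theorem exists_mem_pow_of_mem_submonoidClosure {M : Type*} [Monoid M] {S : Set M} {x : M}
    (hx : x ∈ Submonoid.closure S) : ∃ n : ℕ, x ∈ S ^ n := by
  induction hx using Submonoid.closure_induction with
  | mem x hx => exact ⟨1, by rwa [pow_one]⟩
  | one => exact ⟨0, by rw [pow_zero, Set.mem_one]⟩
  | mul x y _ _ ihx ihy =>
    obtain ⟨m, hm⟩ := ihx
    obtain ⟨n, hn⟩ := ihy
    exact ⟨m + n, pow_add S m n ▸ Set.mul_mem_mul hm hn⟩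

section WordDist

variable {G : Type*} [Group G] {S : Set G} {g h s : G} {n : ℕ}

theorem exists_mem_union_inv_pow_of_mem_closure (hg : g ∈ Subgroup.closure S) :
    ∃ n : ℕ, g ∈ (S ∪ S⁻¹) ^ n := by
  rw [← Subgroup.mem_toSubmonoid, Subgroup.closure_toSubmonoid] at hg
  exact exists_mem_pow_of_mem_submonoidClosure hg

theorem wordDist_le_of_mem_pow (hgh : g⁻¹ * h ∈ (S ∪ S⁻¹) ^ n) : wordDist S g h ≤ n :=
  Nat.cast_le.2 (Nat.sInf_le hgh)

theorem wordDist_one_pow_le (hs : s ∈ S) (n : ℕ) : wordDist S 1 (s ^ n) ≤ n := by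
  apply wordDist_le_of_mem_pow
  rw [inv_one, one_mul]
  exact Set.pow_mem_pow (Or.inl hs)

theorem groupSeminorm_le_mul_of_mem_pow (p : GroupSeminorm G) {C : ℝ} (hp : ∀ s ∈ S, p s ≤ C)
    (hg : g ∈ S ^ n) : p g ≤ n * C := by
  induction n generalizing g with
  | zero =>
    rw [pow_zero, Set.mem_one] at hg
    simp [hg, map_one_eq_zero]
  | succ n ih =>
    rw [pow_succ] at hg
    obtain ⟨x, hx, s, hs, rfl⟩ := Set.mem_mul.1 hg
    calc p (x * s) ≤ p x + p s := map_mul_le_add p x s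
      _ ≤ n * C + C := add_le_add (ih hx) (hp s hs)
      _ = (n + 1 : ℕ) * C := by push_cast; ring

theorem groupSeminorm_le_wordDist_mul (p : GroupSeminorm G) {C : ℝ} (hp : ∀ s ∈ S, p s ≤ C)
    (hgh : g⁻¹ * h ∈ Subgroup.closure S) : p (g⁻¹ * h) ≤ wordDist S g h * C := by
  have hp_symm : ∀ s ∈ S ∪ S⁻¹, p s ≤ C := by
    rintro s (hs | hs)
    · exact hp s hs
    · rw [← map_inv_eq_map p]
      exact hp s⁻¹ hs
  exact groupSeminorm_le_mul_of_mem_pow p hp_symm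
    (Nat.sInf_mem (exists_mem_union_inv_pow_of_mem_closure hgh))

theorem wordDist_one_pow_eq_of_map_eq_ofAdd_one (φ : G →* Multiplicative ℤ)
    (hφ : ∀ t ∈ S, ‖φ t‖ ≤ 1) (hs : s ∈ S) (hφs : φ s = Multiplicative.ofAdd 1) (n : ℕ) :
    wordDist S 1 (s ^ n) = n := by
  refine le_antisymm (wordDist_one_pow_le hs n) ?_
  have hmem : (1 : G)⁻¹ * s ^ n ∈ Subgroup.closure S := by
    rw [inv_one, one_mul]
    exact pow_mem (Subgroup.subset_closure hs) n
  have hle := groupSeminorm_le_wordDist_mul ((normGroupSeminorm (Multiplicative ℤ)).comp φ) hφ hmem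
  have hnorm : ‖φ (s ^ n)‖ = n := by
    simp [hφs, ← ofAdd_nsmul]
  rwa [inv_one, one_mul, GroupSeminorm.comp_apply, coe_normGroupSeminorm, hnorm, mul_one] at hle

end WordDist

section ExponentSum

variable {α : Type*} {x y : α}

open scoped Classical in
/-- The exponent sum of the generator `x`: the homomorphism from the free group to `ℤ`, written
multiplicatively, that sends `x` to `1` and every other generator to `0`. -/
noncomputable def exponentSum (x : α) : FreeGroup α →* Multiplicative ℤ :=
  FreeGroup.lift (Pi.mulSingle x (Multiplicative.ofAdd 1))

theorem exponentSum_of_self (x : α) :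
    exponentSum x (FreeGroup.of x) = Multiplicative.ofAdd 1 := by
  simp [exponentSum]

theorem exponentSum_of_ne (hyx : y ≠ x) : exponentSum x (FreeGroup.of y) = 1 := by
  simp [exponentSum, hyx]

end ExponentSum

theorem norm_exponentSum_b_le_one_of_mem_Tset {t : FreeGroup Gen} (ht : t ∈ Tset) :
    ‖exponentSum Gen.b t‖ ≤ 1 := by
  rcases ht with rfl | ⟨k, -, rfl⟩
  · simp [exponentSum_of_self]
  · simp [exponentSum_of_ne (show Gen.a ≠ Gen.b by nofun)]

/-- In the free group `H = F(a,b)` with the (infinite) generating set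
`T = {b} ∪ {aᵏ : k ≠ 0}`, the word length of `bⁿ` with respect to `T` equals `n` for
every `n ≥ 1`. -/
theorem statement7 (n : ℕ) (hn : 1 ≤ n) :
    wordDist Tset 1 (FreeGroup.of Gen.b ^ n) = (n : ℝ) := by
  exact wordDist_one_pow_eq_of_map_eq_ofAdd_one (exponentSum Gen.b)
    (fun _ => norm_exponentSum_b_le_one_of_mem_Tset) (Or.inl rfl) (exponentSum_of_self Gen.b) n
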